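/- arXiv:1804.03484 — 6 statements merged into one kernel-verified Lean document; each statement's English description precedes it below -/
import Mathlib

section
/- Let Q_{F4} ∈ ℤ[X] be the quotient of (1−X^4)·(1−X^{12})·(1−X^{16})·(1−X^{24}) by (1−X^4)^2·(1−X^8)·(1−X^{12}). Then for every natural number n that is not divisible by 4, the coefficient of X^n in Q_{F4} is 0. -/
open Polynomial

theorem stmt2 (Q : ℤ[X])
    (hQ : ((1 - X ^ 4) * (1 - X ^ 12) * (1 - X ^ 16) * (1 - X ^ 24) : ℤ[X]) =
      (1 - X ^ 4) ^ 2 * (1 - X ^ 8) * (1 - X ^ 12) * Q) :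
    ∀ n : ℕ, ¬ (4 ∣ n) → Q.coeff n = 0 := by
  have hne : ∀ k : ℕ, 0 < k → (1 - X ^ k : ℤ[X]) ≠ 0 := by
    intro k hk h
    have h2 := congrArg (Polynomial.eval 0) h
    simp [hk.ne'] at h2
  have hD : ((1 - X ^ 4) ^ 2 * (1 - X ^ 8) * (1 - X ^ 12) : ℤ[X]) ≠ 0 :=
    mul_ne_zero (mul_ne_zero (pow_ne_zero 2 (hne 4 (by norm_num))) (hne 8 (by norm_num)))
      (hne 12 (by norm_num))
  have hE : Q = expand ℤ 4 ((1 + X ^ 2) * (1 + X + X ^ 2 + X ^ 3 + X ^ 4 + X ^ 5)) := by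
    apply mul_left_cancel₀ hD
    rw [← hQ]
    simp only [map_mul, map_add, map_pow, map_one, expand_X]
    ring
  intro n hn
  rw [hE, coeff_expand (by norm_num), if_neg hn]
end

section
/- In ℤ[X], the polynomial D = (1−X^4)·(1−X^6)·(1−X^8)·(1−X^{10})·(1−X^{12})·(1−X^{14})·(1−X^{16}) divides N = (1−X^4)·(1−X^{12})·(1−X^{16})·(1−X^{20})·(1−X^{24})·(1−X^{28})·(1−X^{36}); moreover the quotient Q = N/D has degree 70, constant coefficient 1, and all of its coefficients are nonnegative. -/
open Polynomial

theorem aux_coeff (n : ℕ) : 0 ≤ ((1 + X ^ 10) * (1 + X ^ 14) * (1 + X ^ 8 + X ^ 16) *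
    (1 + X ^ 6 + X ^ 12 + X ^ 18 + X ^ 24 + X ^ 30) : ℤ[X]).coeff n := by
  have h : ((1 + X ^ 10) * (1 + X ^ 14) * (1 + X ^ 8 + X ^ 16) *
    (1 + X ^ 6 + X ^ 12 + X ^ 18 + X ^ 24 + X ^ 30) : ℤ[X]) =
    ((1 + X ^ 10) * (1 + X ^ 14) * (1 + X ^ 8 + X ^ 16) *
    (1 + X ^ 6 + X ^ 12 + X ^ 18 + X ^ 24 + X ^ 30) : ℕ[X]).map (Nat.castRingHom ℤ) := by
    simp [Polynomial.map_mul, Polynomial.map_add, Polynomial.map_pow]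
  rw [h, coeff_map]
  exact Int.natCast_nonneg _

theorem aux_ne (k : ℕ) (hk : k ≠ 0) : (1 - X ^ k : ℤ[X]) ≠ 0 := by
  intro h
  have := congrArg (eval 0) h
  simp [hk] at this

theorem stmt4 :
    (((1 - X ^ 4) * (1 - X ^ 6) * (1 - X ^ 8) * (1 - X ^ 10) * (1 - X ^ 12) *
          (1 - X ^ 14) * (1 - X ^ 16) : ℤ[X]) ∣
        (1 - X ^ 4) * (1 - X ^ 12) * (1 - X ^ 16) * (1 - X ^ 20) * (1 - X ^ 24) *
          (1 - X ^ 28) * (1 - X ^ 36)) ∧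
    ∀ Q : ℤ[X],
      ((1 - X ^ 4) * (1 - X ^ 12) * (1 - X ^ 16) * (1 - X ^ 20) * (1 - X ^ 24) *
            (1 - X ^ 28) * (1 - X ^ 36) : ℤ[X]) =
          (1 - X ^ 4) * (1 - X ^ 6) * (1 - X ^ 8) * (1 - X ^ 10) * (1 - X ^ 12) *
            (1 - X ^ 14) * (1 - X ^ 16) * Q →
        Q.natDegree = 70 ∧ Q.coeff 0 = 1 ∧ ∀ n : ℕ, 0 ≤ Q.coeff n := by
  have key : ((1 - X ^ 4) * (1 - X ^ 12) * (1 - X ^ 16) * (1 - X ^ 20) * (1 - X ^ 24) *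
            (1 - X ^ 28) * (1 - X ^ 36) : ℤ[X]) =
          (1 - X ^ 4) * (1 - X ^ 6) * (1 - X ^ 8) * (1 - X ^ 10) * (1 - X ^ 12) *
            (1 - X ^ 14) * (1 - X ^ 16) * ((1 + X ^ 10) * (1 + X ^ 14) * (1 + X ^ 8 + X ^ 16) *
    (1 + X ^ 6 + X ^ 12 + X ^ 18 + X ^ 24 + X ^ 30)) := by
    have h1 : (1 - X ^ 20 : ℤ[X]) = (1 - X ^ 10) * (1 + X ^ 10) := by ring
    have h2 : (1 - X ^ 28 : ℤ[X]) = (1 - X ^ 14) * (1 + X ^ 14) := by ring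
    have h3 : (1 - X ^ 24 : ℤ[X]) = (1 - X ^ 8) * (1 + X ^ 8 + X ^ 16) := by ring
    have h4 : (1 - X ^ 36 : ℤ[X]) =
        (1 - X ^ 6) * (1 + X ^ 6 + X ^ 12 + X ^ 18 + X ^ 24 + X ^ 30) := by ring
    rw [h1, h2, h3, h4]
    ac_rfl
  refine ⟨⟨_, key⟩, fun Q hQ => ?_⟩
  have hne : ((1 - X ^ 4) * (1 - X ^ 6) * (1 - X ^ 8) * (1 - X ^ 10) * (1 - X ^ 12) *
            (1 - X ^ 14) * (1 - X ^ 16) : ℤ[X]) ≠ 0 := by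
    simp only [ne_eq, mul_eq_zero, not_or]
    refine ⟨⟨⟨⟨⟨⟨?_, ?_⟩, ?_⟩, ?_⟩, ?_⟩, ?_⟩, ?_⟩ <;> exact aux_ne _ (by norm_num)
  have hq := mul_left_cancel₀ hne (hQ.symm.trans key)
  subst hq
  refine ⟨?_, ?_, aux_coeff⟩
  · compute_degree!
  · rw [coeff_zero_eq_eval_zero]
    simp
end

section
/- In ℤ[X], the polynomial D = (1−X^4)·(1−X^8)·(1−X^{12})·(1−X^{16})^2·(1−X^{20})·(1−X^{24})·(1−X^{28}) divides N = (1−X^4)·(1−X^{16})·(1−X^{24})·(1−X^{28})·(1−X^{36})·(1−X^{40})·(1−X^{48})·(1−X^{60}); moreover the quotient Q = N/D has degree 128, constant coefficient 1, and all of its coefficients are nonnegative. -/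
open Polynomial

noncomputable def qN : ℕ[X] :=
  (1 + X ^ 12 + X ^ 24) * (1 + X ^ 8 + X ^ 16 + X ^ 24 + X ^ 32) * (1 + X ^ 16 + X ^ 32) *
    (1 + X ^ 20 + X ^ 40)

theorem qN_map : qN.map (Nat.castRingHom ℤ) =
    (1 + X ^ 12 + X ^ 24) * (1 + X ^ 8 + X ^ 16 + X ^ 24 + X ^ 32) * (1 + X ^ 16 + X ^ 32) *
    (1 + X ^ 20 + X ^ 40) := by
  simp [qN, Polynomial.map_mul, Polynomial.map_add, Polynomial.map_pow]

theorem qN_deg : qN.natDegree = 128 := by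
  have h1 : (1 + X ^ 12 + X ^ 24 : ℕ[X]).natDegree = 24 := by compute_degree!
  have h2 : (1 + X ^ 8 + X ^ 16 + X ^ 24 + X ^ 32 : ℕ[X]).natDegree = 32 := by compute_degree!
  have h3 : (1 + X ^ 16 + X ^ 32 : ℕ[X]).natDegree = 32 := by compute_degree!
  have h4 : (1 + X ^ 20 + X ^ 40 : ℕ[X]).natDegree = 40 := by compute_degree!
  have n1 : (1 + X ^ 12 + X ^ 24 : ℕ[X]) ≠ 0 := by intro h; simp [h] at h1
  have n2 : (1 + X ^ 8 + X ^ 16 + X ^ 24 + X ^ 32 : ℕ[X]) ≠ 0 := by intro h; simp [h] at h2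
  have n3 : (1 + X ^ 16 + X ^ 32 : ℕ[X]) ≠ 0 := by intro h; simp [h] at h3
  have n4 : (1 + X ^ 20 + X ^ 40 : ℕ[X]) ≠ 0 := by intro h; simp [h] at h4
  rw [qN, natDegree_mul (mul_ne_zero (mul_ne_zero n1 n2) n3) n4,
    natDegree_mul (mul_ne_zero n1 n2) n3, natDegree_mul n1 n2, h1, h2, h3, h4]

theorem e8_factor : ((1 - X ^ 4) * (1 - X ^ 16) * (1 - X ^ 24) * (1 - X ^ 28) * (1 - X ^ 36) *
            (1 - X ^ 40) * (1 - X ^ 48) * (1 - X ^ 60) : ℤ[X]) =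
          (1 - X ^ 4) * (1 - X ^ 8) * (1 - X ^ 12) * (1 - X ^ 16) ^ 2 * (1 - X ^ 20) *
            (1 - X ^ 24) * (1 - X ^ 28) * qN.map (Nat.castRingHom ℤ) := by
  rw [qN_map]
  have a1 : (1 - X ^ 36 : ℤ[X]) = (1 - X ^ 12) * (1 + X ^ 12 + X ^ 24) := by ring
  have a2 : (1 - X ^ 40 : ℤ[X]) = (1 - X ^ 8) * (1 + X ^ 8 + X ^ 16 + X ^ 24 + X ^ 32) := by ring
  have a3 : (1 - X ^ 48 : ℤ[X]) = (1 - X ^ 16) * (1 + X ^ 16 + X ^ 32) := by ring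
  have a4 : (1 - X ^ 60 : ℤ[X]) = (1 - X ^ 20) * (1 + X ^ 20 + X ^ 40) := by ring
  rw [a1, a2, a3, a4]
  generalize (1 + X ^ 12 + X ^ 24 : ℤ[X]) = b1
  generalize (1 + X ^ 8 + X ^ 16 + X ^ 24 + X ^ 32 : ℤ[X]) = b2
  generalize (1 + X ^ 16 + X ^ 32 : ℤ[X]) = b3
  generalize (1 + X ^ 20 + X ^ 40 : ℤ[X]) = b4
  generalize (1 - X ^ 4 : ℤ[X]) = c1
  generalize (1 - X ^ 8 : ℤ[X]) = c2
  generalize (1 - X ^ 12 : ℤ[X]) = c3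
  generalize (1 - X ^ 16 : ℤ[X]) = c4
  generalize (1 - X ^ 20 : ℤ[X]) = c5
  generalize (1 - X ^ 24 : ℤ[X]) = c6
  generalize (1 - X ^ 28 : ℤ[X]) = c7
  ring

theorem stmt7 :
    (((1 - X ^ 4) * (1 - X ^ 8) * (1 - X ^ 12) * (1 - X ^ 16) ^ 2 * (1 - X ^ 20) *
          (1 - X ^ 24) * (1 - X ^ 28) : ℤ[X]) ∣
        (1 - X ^ 4) * (1 - X ^ 16) * (1 - X ^ 24) * (1 - X ^ 28) * (1 - X ^ 36) *
          (1 - X ^ 40) * (1 - X ^ 48) * (1 - X ^ 60)) ∧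
    ∀ Q : ℤ[X],
      ((1 - X ^ 4) * (1 - X ^ 16) * (1 - X ^ 24) * (1 - X ^ 28) * (1 - X ^ 36) *
            (1 - X ^ 40) * (1 - X ^ 48) * (1 - X ^ 60) : ℤ[X]) =
          (1 - X ^ 4) * (1 - X ^ 8) * (1 - X ^ 12) * (1 - X ^ 16) ^ 2 * (1 - X ^ 20) *
            (1 - X ^ 24) * (1 - X ^ 28) * Q →
        Q.natDegree = 128 ∧ Q.coeff 0 = 1 ∧ ∀ n : ℕ, 0 ≤ Q.coeff n := by
  refine ⟨⟨_, e8_factor⟩, fun Q hQ => ?_⟩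
  rw [e8_factor] at hQ
  have hD : ((1 - X ^ 4) * (1 - X ^ 8) * (1 - X ^ 12) * (1 - X ^ 16) ^ 2 * (1 - X ^ 20) *
            (1 - X ^ 24) * (1 - X ^ 28) : ℤ[X]) ≠ 0 := by
    intro h
    have := congrArg (eval 2) h
    norm_num at this
  have hq := mul_left_cancel₀ hD hQ
  subst hq
  refine ⟨?_, ?_, fun n => ?_⟩
  · rw [natDegree_map_eq_of_injective (Nat.castRingHom ℤ).injective_nat, qN_deg]
  · rw [qN_map, coeff_zero_eq_eval_zero]
    simp
  · rw [coeff_map]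
    simp
end

section
/- Let Q_{E8} ∈ ℤ[X] be the quotient of (1−X^4)·(1−X^{16})·(1−X^{24})·(1−X^{28})·(1−X^{36})·(1−X^{40})·(1−X^{48})·(1−X^{60}) by (1−X^4)·(1−X^8)·(1−X^{12})·(1−X^{16})^2·(1−X^{20})·(1−X^{24})·(1−X^{28}). Then the coefficient of X^d in Q_{E8} is 0 for every d in the set {2, 5, 9, 14, 25, 27, 35, 42, 49, 70}. -/
open Polynomial

theorem one_sub_X_pow_ne (n : ℕ) (hn : n ≠ 0) : (1 - X ^ n : ℤ[X]) ≠ 0 := by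
  intro h
  have := congrArg (eval 0) h
  simp [hn] at this

theorem stmt10 (Q : ℤ[X])
    (hQ : ((1 - X ^ 4) * (1 - X ^ 16) * (1 - X ^ 24) * (1 - X ^ 28) * (1 - X ^ 36) *
        (1 - X ^ 40) * (1 - X ^ 48) * (1 - X ^ 60) : ℤ[X]) =
      (1 - X ^ 4) * (1 - X ^ 8) * (1 - X ^ 12) * (1 - X ^ 16) ^ 2 * (1 - X ^ 20) *
        (1 - X ^ 24) * (1 - X ^ 28) * Q) :
    ∀ d ∈ ({2, 5, 9, 14, 25, 27, 35, 42, 49, 70} : Finset ℕ), Q.coeff d = 0 := by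
  have key : Q = expand ℤ 4 ((1 + X ^ 3 + X ^ 6) * (1 + X ^ 2 + X ^ 4 + X ^ 6 + X ^ 8) *
      (1 + X ^ 4 + X ^ 8) * (1 + X ^ 5 + X ^ 10)) := by
    have hne : ((1 - X ^ 4) * (1 - X ^ 8) * (1 - X ^ 12) * (1 - X ^ 16) ^ 2 * (1 - X ^ 20) *
        (1 - X ^ 24) * (1 - X ^ 28) : ℤ[X]) ≠ 0 := by
      have h := one_sub_X_pow_ne
      refine mul_ne_zero (mul_ne_zero (mul_ne_zero (mul_ne_zero (mul_ne_zero (mul_ne_zero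
        (h _ ?_) (h _ ?_)) (h _ ?_)) (pow_ne_zero _ (h _ ?_))) (h _ ?_)) (h _ ?_)) (h _ ?_) <;>
        norm_num
    apply mul_left_cancel₀ hne
    rw [← hQ]
    simp only [map_mul, map_add, map_pow, map_one, expand_X, ← pow_mul]
    have e1 : (1 - X ^ 36 : ℤ[X]) = (1 - X ^ 12) * (1 + X ^ 12 + X ^ 24) := by ring
    have e2 : (1 - X ^ 40 : ℤ[X]) =
      (1 - X ^ 8) * (1 + X ^ 8 + X ^ 16 + X ^ 24 + X ^ 32) := by ring
    have e3 : (1 - X ^ 48 : ℤ[X]) = (1 - X ^ 16) * (1 + X ^ 16 + X ^ 32) := by ring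
    have e4 : (1 - X ^ 60 : ℤ[X]) = (1 - X ^ 20) * (1 + X ^ 20 + X ^ 40) := by ring
    rw [e1, e2, e3, e4]
    norm_num only
    generalize (1 - X ^ 4 : ℤ[X]) = a4
    generalize (1 - X ^ 8 : ℤ[X]) = a8
    generalize (1 - X ^ 12 : ℤ[X]) = a12
    generalize (1 - X ^ 16 : ℤ[X]) = a16
    generalize (1 - X ^ 20 : ℤ[X]) = a20
    generalize (1 - X ^ 24 : ℤ[X]) = a24
    generalize (1 - X ^ 28 : ℤ[X]) = a28
    generalize (1 + X ^ 12 + X ^ 24 : ℤ[X]) = b1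
    generalize (1 + X ^ 8 + X ^ 16 + X ^ 24 + X ^ 32 : ℤ[X]) = b2
    generalize (1 + X ^ 16 + X ^ 32 : ℤ[X]) = b3
    generalize (1 + X ^ 20 + X ^ 40 : ℤ[X]) = b4
    ring
  intro d hd
  have h4 : ¬ 4 ∣ d := by
    revert d
    decide
  rw [key, coeff_expand (by norm_num), if_neg h4]
end

section
/- Let Q_{E8} ∈ ℤ[X] be the quotient of (1−X^4)·(1−X^{16})·(1−X^{24})·(1−X^{28})·(1−X^{36})·(1−X^{40})·(1−X^{48})·(1−X^{60}) by (1−X^4)·(1−X^8)·(1−X^{12})·(1−X^{16})^2·(1−X^{20})·(1−X^{24})·(1−X^{28}). Then the coefficient of X^d in Q_{E8} is 0 for every d in the set {6, 9, 10, 11, 13, 14, 15, 17, 18, 21, 22, 29}. -/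
open Polynomial

theorem aux_comm {R : Type*} [CommRing R] (a b c e f g h p q r s : R) :
    a * e * g * h * (c * p) * (b * q) * (e * r) * (f * s) =
      a * b * c * e ^ 2 * f * g * h * (p * q * r * s) := by ring

theorem stmt12 (Q : ℤ[X])
    (hQ : ((1 - X ^ 4) * (1 - X ^ 16) * (1 - X ^ 24) * (1 - X ^ 28) * (1 - X ^ 36) *
        (1 - X ^ 40) * (1 - X ^ 48) * (1 - X ^ 60) : ℤ[X]) =
      (1 - X ^ 4) * (1 - X ^ 8) * (1 - X ^ 12) * (1 - X ^ 16) ^ 2 * (1 - X ^ 20) *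
        (1 - X ^ 24) * (1 - X ^ 28) * Q) :
    ∀ d ∈ ({6, 9, 10, 11, 13, 14, 15, 17, 18, 21, 22, 29} : Finset ℕ), Q.coeff d = 0 := by
  have hD : ((1 - X ^ 4) * (1 - X ^ 8) * (1 - X ^ 12) * (1 - X ^ 16) ^ 2 * (1 - X ^ 20) *
        (1 - X ^ 24) * (1 - X ^ 28) : ℤ[X]) ≠ 0 := by
    intro h
    have := congrArg (eval 0) h
    simp at this
  have hE : Q = expand ℤ 4 ((1 + X ^ 3 + X ^ 6) * (1 + X ^ 2 + X ^ 4 + X ^ 6 + X ^ 8) *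
      (1 + X ^ 4 + X ^ 8) * (1 + X ^ 5 + X ^ 10)) := by
    apply mul_left_cancel₀ hD
    rw [← hQ]
    simp only [map_mul, map_add, map_pow, map_one, expand_X]
    have e1 : (1 - X ^ 36 : ℤ[X]) =
        (1 - X ^ 12) * (1 + (X ^ 4) ^ 3 + (X ^ 4) ^ 6) := by ring
    have e2 : (1 - X ^ 40 : ℤ[X]) = (1 - X ^ 8) *
        (1 + (X ^ 4) ^ 2 + (X ^ 4) ^ 4 + (X ^ 4) ^ 6 + (X ^ 4) ^ 8) := by ring
    have e3 : (1 - X ^ 48 : ℤ[X]) =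
        (1 - X ^ 16) * (1 + (X ^ 4) ^ 4 + (X ^ 4) ^ 8) := by ring
    have e4 : (1 - X ^ 60 : ℤ[X]) =
        (1 - X ^ 20) * (1 + (X ^ 4) ^ 5 + (X ^ 4) ^ 10) := by ring
    rw [e1, e2, e3, e4]
    exact aux_comm _ _ _ _ _ _ _ _ _ _ _
  intro d hd
  rw [hE, coeff_expand (by norm_num), if_neg]
  revert d
  decide
end

section
/- Let S = {2, 5, 6, 8, 9, 12} and D = (1−X^4)·(1−X^8)·(1−X^{12})·(1−X^{16}) ∈ ℤ[X]. For a two-element subset {a,b} ⊆ S with complement {c1,c2,c3,c4}, set N_{a,b} = (1+X^{2a−1})·(1+X^{2b−1})·(1−X^{2c1})·(1−X^{2c2})·(1−X^{2c3})·(1−X^{2c4}). Then D divides N_{a,b} in ℤ[X] if and only if {a,b} = {5,9}. -/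
open Polynomial

theorem stmt13_eval :
    ∀ a ∈ ({2, 5, 6, 8, 9, 12} : Finset ℕ), ∀ b ∈ ({2, 5, 6, 8, 9, 12} : Finset ℕ),
      a ≠ b →
        (((1 - 2 ^ 4) * (1 - 2 ^ 8) * (1 - 2 ^ 12) * (1 - 2 ^ 16) : ℤ) ∣
            (1 + 2 ^ (2 * a - 1)) * (1 + 2 ^ (2 * b - 1)) *
              ∏ c ∈ ({2, 5, 6, 8, 9, 12} : Finset ℕ) \ {a, b}, (1 - 2 ^ (2 * c))) →
          ({a, b} : Finset ℕ) = {5, 9} := by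
  decide +kernel

theorem stmt13 :
    ∀ a ∈ ({2, 5, 6, 8, 9, 12} : Finset ℕ), ∀ b ∈ ({2, 5, 6, 8, 9, 12} : Finset ℕ),
      a ≠ b →
        ((((1 - X ^ 4) * (1 - X ^ 8) * (1 - X ^ 12) * (1 - X ^ 16) : ℤ[X]) ∣
            (1 + X ^ (2 * a - 1)) * (1 + X ^ (2 * b - 1)) *
              ∏ c ∈ ({2, 5, 6, 8, 9, 12} : Finset ℕ) \ {a, b}, (1 - X ^ (2 * c))) ↔
          ({a, b} : Finset ℕ) = {5, 9}) := by
  intro a ha b hb hab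
  constructor
  · intro h
    apply stmt13_eval a ha b hb hab
    have h2 := map_dvd (Polynomial.evalRingHom (2 : ℤ)) h
    simp only [map_mul, map_prod, map_sub, map_add, map_pow, map_one,
      Polynomial.coe_evalRingHom, Polynomial.eval_X] at h2
    exact h2
  · intro h
    have hs : ({2, 5, 6, 8, 9, 12} : Finset ℕ) \ {5, 9} = {2, 6, 8, 12} := by decide
    have hp : ∏ c ∈ ({2, 6, 8, 12} : Finset ℕ), (1 - X ^ (2 * c) : ℤ[X])
        = (1 - X ^ 4) * (1 - X ^ 8) * (1 - X ^ 12) * (1 - X ^ 16) * (1 + X ^ 8 + X ^ 16) := by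
      simp
      ring
    rw [h, hs, hp]
    exact Dvd.dvd.mul_left (Dvd.intro _ rfl) _
end
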